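/- arXiv:2303.15088 — 2 statements merged into one kernel-verified Lean document; each statement's English description precedes it below -/
import Mathlib

section
/- Let f : V × V → W be an odd object of SSKE (i.e., f(V₀, V₀) = f(V₁, V₁) = 0) of dimension (m | n) with m, n ≥ 1 and rank (0 | mn), i.e., W₀ = 0 and dim W₁ = mn. Then L_f is a generalized Heisenberg Lie superalgebra (Z(L_f) = L_f² = 0 ⊕ W) of dimension (m | mn + n), i.e., dim (L_f)₀ = m and dim (L_f)₁ = mn + n, whose derived subalgebra has dimension (0 | mn). -/
open TensorProduct

noncomputable section

/-- The sign `(−1)^{σ·τ}` (for degrees `σ τ : ℤ/2`) as an element of the field `F`. -/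
def ssign (F : Type*) [Field F] (σ τ : ZMod 2) : F := (-1 : F) ^ (σ * τ).val

variable {F V W L : Type*}

section Defs

variable [Field F] [AddCommGroup V] [Module F V] [AddCommGroup W] [Module F W]
  [AddCommGroup L] [Module F L]

/-- `f : V × V → W` is an object of the category `SSKE`: a grading-preserving
skew-supersymmetric bilinear map between superspaces whose image spans `W`. -/
structure IsSSKE (gV : ZMod 2 → Submodule F V) (gW : ZMod 2 → Submodule F W)
    (f : V →ₗ[F] V →ₗ[F] W) : Prop where
  internalV : DirectSum.IsInternal gV
  internalW : DirectSum.IsInternal gW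
  grading : ∀ σ τ : ZMod 2, ∀ u ∈ gV σ, ∀ v ∈ gV τ, f u v ∈ gW (σ + τ)
  skew : ∀ σ τ : ZMod 2, ∀ u ∈ gV σ, ∀ v ∈ gV τ, f u v = -(ssign F σ τ) • f v u
  span_eq_top : Submodule.span F {w : W | ∃ u v : V, f u v = w} = ⊤

/-- A subspace `U` of a superspace is graded: `U = (U ∩ V₀) ⊕ (U ∩ V₁)`. -/
def IsGradedSub (gV : ZMod 2 → Submodule F V) (U : Submodule F V) : Prop :=
  U = U ⊓ gV 0 ⊔ U ⊓ gV 1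

/-- The subspace `X_g` of `V ⊗ W` (for the restriction of `g` to a subspace `U` of `V`),
spanned by all `(−1)^{|a||c|} a ⊗ g(b,c) + (−1)^{|b||a|} b ⊗ g(c,a) + (−1)^{|c||b|} c ⊗ g(a,b)`
with `a, b, c` homogeneous elements of `U`. For `U = ⊤` this is `X_g` itself. -/
def XFr (gV : ZMod 2 → Submodule F V) (U : Submodule F V)
    (g : V →ₗ[F] V →ₗ[F] W) : Submodule F (V ⊗[F] W) :=
  Submodule.span F {z : V ⊗[F] W | ∃ σ τ ρ : ZMod 2, ∃ a ∈ U ⊓ gV σ, ∃ b ∈ U ⊓ gV τ,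
    ∃ c ∈ U ⊓ gV ρ,
    z = ssign F σ ρ • (a ⊗ₜ[F] g b c) + ssign F τ σ • (b ⊗ₜ[F] g c a)
      + ssign F ρ τ • (c ⊗ₜ[F] g a b)}

/-- The epicenter `Z*(g)` of (the restriction to a subspace `U` of) a
skew-supersymmetric bilinear map `g`: all `w = g(u,v)` with `u, v` homogeneous in `U`
such that `(−1)^{|x||v|} x ⊗ w ∈ X_g` for every homogeneous `x ∈ U`. -/
def Zstar (gV : ZMod 2 → Submodule F V) (U : Submodule F V)
    (g : V →ₗ[F] V →ₗ[F] W) : Set W :=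
  {w : W | ∃ σ τ : ZMod 2, ∃ u ∈ U ⊓ gV σ, ∃ v ∈ U ⊓ gV τ, w = g u v ∧
    ∀ ρ : ZMod 2, ∀ x ∈ U ⊓ gV ρ, ssign F ρ τ • (x ⊗ₜ[F] w) ∈ XFr gV U g}

/-- The subspace `U ⊗ T` of `V ⊗ W`. -/
def tensSpan (U : Submodule F V) (T : Submodule F W) : Submodule F (V ⊗[F] W) :=
  Submodule.span F {z : V ⊗[F] W | ∃ u ∈ U, ∃ t ∈ T, z = u ⊗ₜ[F] t}

/-- The bracket of the Lie superalgebra `L_f = V ⊕ W`: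
`[(v,w),(v′,w′)] = (0, f(v,v′))`. -/
def superBracket (f : V →ₗ[F] V →ₗ[F] W) :
    (V × W) →ₗ[F] (V × W) →ₗ[F] (V × W) :=
  ((f.compl₂ (LinearMap.fst F V W)).compr₂ (LinearMap.inr F V W)).comp
    (LinearMap.fst F V W)

/-- The derived subalgebra `L² `: the span of all brackets. -/
def derivedSub (B : L →ₗ[F] L →ₗ[F] L) : Submodule F L :=
  Submodule.span F {z : L | ∃ x y : L, z = B x y}

/-- The span of all brackets of elements of a subspace `P`. -/
def derivedOn (B : L →ₗ[F] L →ₗ[F] L) (P : Submodule F L) : Submodule F L :=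
  Submodule.span F {z : L | ∃ x ∈ P, ∃ y ∈ P, z = B x y}

/-- The axioms of a Lie superalgebra: `L` with grading `gL`, an internal direct sum,
and a bilinear bracket `B` which preserves the grading and satisfies graded
skew-symmetry and the graded Jacobi identity. -/
structure IsLieSuper (gL : ZMod 2 → Submodule F L) (B : L →ₗ[F] L →ₗ[F] L) : Prop where
  internal : DirectSum.IsInternal gL
  grading : ∀ σ τ : ZMod 2, ∀ x ∈ gL σ, ∀ y ∈ gL τ, B x y ∈ gL (σ + τ)
  skew : ∀ σ τ : ZMod 2, ∀ x ∈ gL σ, ∀ y ∈ gL τ, B x y = -(ssign F σ τ) • B y x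
  jacobi : ∀ σ τ ρ : ZMod 2, ∀ x ∈ gL σ, ∀ y ∈ gL τ, ∀ z ∈ gL ρ,
    ssign F σ ρ • B x (B y z) + ssign F τ σ • B y (B z x)
      + ssign F ρ τ • B z (B x y) = 0

end Defs

/-!
By parity and skew-supersymmetry, the odd part `W₁` is spanned by the values `f a b` with `a ∈ V₀`
and `b ∈ V₁`, so it is a quotient of `V₀ ⊗ V₁`. When `dim W₁ = mn` the quotient map is an
isomorphism, and since a pure tensor of nonzero vectors is nonzero, `f a b ≠ 0` for nonzero `a ∈ V₀`
and `b ∈ V₁`. The kernel of `f` is a graded subspace, hence it is trivial as soon as `V₀` and `V₁`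
are both nonzero. The center of `L_f` is `ker f ⊕ W`, and its derived subalgebra is `0 ⊕ W`.
-/

section LinearAlgebra

theorem eq_zero_or_eq_zero_of_tmul_eq_zero {R M N : Type*} [CommRing R] [IsDomain R]
    [AddCommGroup M] [Module R M] [Module.IsTorsionFree R M]
    [AddCommGroup N] [Module R N] [Module.IsTorsionFree R N]
    {a : M} {b : N} (h : a ⊗ₜ[R] b = 0) : a = 0 ∨ b = 0 := by
  by_contra! hne
  have ha : LinearIndependent R fun _ : Unit => a := .of_subsingleton () hne.1
  have hb : LinearIndependent R fun _ : Unit => b := .of_subsingleton () hne.2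
  exact (ha.tmul_of_isDomain hb).ne_zero ((), ()) h

variable {K M N P : Type*} [Field K] [AddCommGroup M] [Module K M] [AddCommGroup N] [Module K N]
  [AddCommGroup P] [Module K P]

theorem finrank_submodule_prod (p : Submodule K M) (q : Submodule K N)
    [FiniteDimensional K p] [FiniteDimensional K q] :
    Module.finrank K (p.prod q) = Module.finrank K p + Module.finrank K q := by
  have hinj : Function.Injective (p.subtype.prodMap q.subtype) :=
    p.injective_subtype.prodMap q.injective_subtype
  have hrange : (p.subtype.prodMap q.subtype).range = p.prod q := by
    rw [LinearMap.range_prodMap, p.range_subtype, q.range_subtype]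
  rw [← hrange, LinearMap.finrank_range_of_inj hinj, Module.finrank_prod]

theorem lift_comp_mapIncl_injective_of_finrank_map₂_eq_mul (f : M →ₗ[K] N →ₗ[K] P)
    (p : Submodule K M) (q : Submodule K N) [FiniteDimensional K p] [FiniteDimensional K q]
    (h : Module.finrank K (Submodule.map₂ f p q) = Module.finrank K p * Module.finrank K q) :
    Function.Injective (TensorProduct.lift f ∘ₗ TensorProduct.mapIncl p q) := by
  rw [TensorProduct.map₂_eq_range_lift_comp_mapIncl, ← Module.finrank_tensorProduct,
    ← LinearMap.finrank_range_add_finrank_ker (TensorProduct.lift f ∘ₗ TensorProduct.mapIncl p q),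
    Nat.left_eq_add, Submodule.finrank_eq_zero] at h
  exact LinearMap.ker_eq_bot.1 h

theorem eq_zero_or_eq_zero_of_finrank_map₂_eq_mul {f : M →ₗ[K] N →ₗ[K] P}
    {p : Submodule K M} {q : Submodule K N} [FiniteDimensional K p] [FiniteDimensional K q]
    (h : Module.finrank K (Submodule.map₂ f p q) = Module.finrank K p * Module.finrank K q)
    {a : M} (ha : a ∈ p) {b : N} (hb : b ∈ q) (hab : f a b = 0) : a = 0 ∨ b = 0 := by
  have htmul : (⟨a, ha⟩ : p) ⊗ₜ[K] (⟨b, hb⟩ : q) = 0 := by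
    apply lift_comp_mapIncl_injective_of_finrank_map₂_eq_mul f p q h
    simpa using hab
  simpa using eq_zero_or_eq_zero_of_tmul_eq_zero htmul

end LinearAlgebra

section SuperBracket

variable [Field F] [AddCommGroup V] [Module F V] [AddCommGroup W] [Module F W]
  (f : V →ₗ[F] V →ₗ[F] W)

theorem superBracket_apply (x y : V × W) : superBracket f x y = (0, f x.1 y.1) := rfl

theorem derivedSub_superBracket :
    derivedSub (superBracket f) =
      (⊥ : Submodule F V).prod (Submodule.span F {w : W | ∃ u v : V, f u v = w}) := by
  rw [← Submodule.map_inr, Submodule.map_span, derivedSub]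
  congr 1
  ext z
  simp [superBracket_apply, eq_comm]

theorem setOf_forall_superBracket_eq_zero :
    {z : V × W | ∀ x : V × W, superBracket f z x = 0} =
      ((LinearMap.ker f).prod ⊤ : Submodule F (V × W)) := by
  ext z
  simp [superBracket_apply, LinearMap.ext_iff]

end SuperBracket

theorem isCompl_zero_one_of_isInternal {R M : Type*} [Ring R] [AddCommGroup M] [Module R M]
    {g : ZMod 2 → Submodule R M} (h : DirectSum.IsInternal g) : IsCompl (g 0) (g 1) :=
  h.isCompl zero_ne_one (Set.eq_univ_iff_forall.2 (by decide : ∀ x : ZMod 2, x = 0 ∨ x = 1)).symm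

namespace IsSSKE

variable [Field F] [AddCommGroup V] [Module F V] [AddCommGroup W] [Module F W]
  {gV : ZMod 2 → Submodule F V} {gW : ZMod 2 → Submodule F W} {f : V →ₗ[F] V →ₗ[F] W}

theorem map₂_le (hf : IsSSKE gV gW f) (σ τ : ZMod 2) :
    Submodule.map₂ f (gV σ) (gV τ) ≤ gW (σ + τ) :=
  Submodule.map₂_le.2 (hf.grading σ τ)

theorem map₂_swap_le (hf : IsSSKE gV gW f) (σ τ : ZMod 2) :
    Submodule.map₂ f (gV σ) (gV τ) ≤ Submodule.map₂ f (gV τ) (gV σ) :=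
  Submodule.map₂_le.2 fun u hu v hv => by
    rw [hf.skew σ τ u hu v hv]
    exact Submodule.smul_mem _ _ (Submodule.apply_mem_map₂ f hv hu)

theorem map₂_zero_one_sup_eq_top (hf : IsSSKE gV gW f) :
    Submodule.map₂ f (gV 0) (gV 1) ⊔ gW 0 = ⊤ := by
  have htop : Submodule.map₂ f (gV 0 ⊔ gV 1) (gV 0 ⊔ gV 1) = ⊤ := by
    rw [(isCompl_zero_one_of_isInternal hf.internalV).sup_eq_top, Submodule.map₂_eq_span_image2,
      ← hf.span_eq_top]
    simp [Set.image2]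
  rw [eq_top_iff, ← htop, Submodule.map₂_sup_left, Submodule.map₂_sup_right,
    Submodule.map₂_sup_right]
  have h00 : Submodule.map₂ f (gV 0) (gV 0) ≤ gW 0 := hf.map₂_le 0 0
  have h11 : Submodule.map₂ f (gV 1) (gV 1) ≤ gW 0 := hf.map₂_le 1 1
  exact sup_le (sup_le (le_sup_of_le_right h00) le_sup_left)
    (sup_le (le_sup_of_le_left (hf.map₂_swap_le 1 0)) (le_sup_of_le_right h11))

theorem map₂_zero_one (hf : IsSSKE gV gW f) : Submodule.map₂ f (gV 0) (gV 1) = gW 1 := by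
  have hle : Submodule.map₂ f (gV 0) (gV 1) ≤ gW 1 := hf.map₂_le 0 1
  have hW := isCompl_zero_one_of_isInternal hf.internalW
  refine eq_of_le_of_inf_le_of_sup_le (z := gW 0) hle ?_ ?_
  · rw [hW.symm.inf_eq_bot]
    exact bot_le
  · rw [hf.map₂_zero_one_sup_eq_top]
    exact le_top

theorem isGradedSub_ker (hf : IsSSKE gV gW f) : IsGradedSub gV (LinearMap.ker f) := by
  have hV := (Submodule.sup_eq_top_iff _ _).1
    (isCompl_zero_one_of_isInternal hf.internalV).sup_eq_top
  refine le_antisymm (fun v hv => ?_) (sup_le inf_le_left inf_le_left)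
  obtain ⟨a, ha, b, hb, rfl⟩ := hV v
  rw [LinearMap.mem_ker, map_add] at hv
  have hac : ∀ τ, ∀ c ∈ gV τ, f a c = 0 := fun τ c hc => by
    have hdisj : Disjoint (gW (0 + τ)) (gW (1 + τ)) :=
      hf.internalW.submodule_iSupIndep.pairwiseDisjoint (by simp)
    have hneg : f a c = -f b c := eq_neg_of_add_eq_zero_left (LinearMap.congr_fun hv c)
    refine Submodule.disjoint_def.1 hdisj _ (hf.grading 0 τ a ha c hc) ?_
    rw [hneg]
    exact neg_mem (hf.grading 1 τ b hb c hc)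
  have hfa : f a = 0 := by
    ext x
    obtain ⟨c, hc, d, hd, rfl⟩ := hV x
    simp [hac 0 c hc, hac 1 d hd]
  have hfb : f b = 0 := by rwa [hfa, zero_add] at hv
  exact Submodule.add_mem_sup ⟨hfa, ha⟩ ⟨hfb, hb⟩

theorem ker_eq_bot [FiniteDimensional F (gV 0)] [FiniteDimensional F (gV 1)]
    (hf : IsSSKE gV gW f) (hV0 : gV 0 ≠ ⊥) (hV1 : gV 1 ≠ ⊥)
    (hW1 : Module.finrank F (gW 1) = Module.finrank F (gV 0) * Module.finrank F (gV 1)) :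
    LinearMap.ker f = ⊥ := by
  obtain ⟨c, hc, hc0⟩ := Submodule.exists_mem_ne_zero_of_ne_bot hV0
  obtain ⟨d, hd, hd0⟩ := Submodule.exists_mem_ne_zero_of_ne_bot hV1
  rw [← hf.map₂_zero_one] at hW1
  have heven : LinearMap.ker f ⊓ gV 0 = ⊥ := (Submodule.eq_bot_iff _).2 fun a ⟨hfa, ha⟩ =>
    (eq_zero_or_eq_zero_of_finrank_map₂_eq_mul hW1 ha hd
      (LinearMap.congr_fun hfa d)).resolve_right hd0
  have hodd : LinearMap.ker f ⊓ gV 1 = ⊥ := (Submodule.eq_bot_iff _).2 fun b ⟨hfb, hb⟩ => by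
    have hcb : f c b = 0 := by
      rw [hf.skew 0 1 c hc b hb, LinearMap.mem_ker.1 hfb, LinearMap.zero_apply, smul_zero]
    exact (eq_zero_or_eq_zero_of_finrank_map₂_eq_mul hW1 hc hb hcb).resolve_left hc0
  have hgraded : LinearMap.ker f = LinearMap.ker f ⊓ gV 0 ⊔ LinearMap.ker f ⊓ gV 1 :=
    hf.isGradedSub_ker
  rw [hgraded, heven, hodd, sup_bot_eq]

end IsSSKE

theorem stmt6_general [Field F] [AddCommGroup V] [Module F V] [AddCommGroup W] [Module F W]
    [FiniteDimensional F V] [FiniteDimensional F W]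
    (gV : ZMod 2 → Submodule F V) (gW : ZMod 2 → Submodule F W)
    (f : V →ₗ[F] V →ₗ[F] W) (hf : IsSSKE gV gW f)
    (m n r : ℕ) (hm : 1 ≤ m) (hn : 1 ≤ n)
    (hV0 : Module.finrank F (gV 0) = m) (hV1 : Module.finrank F (gV 1) = n)
    (hW0 : Module.finrank F (gW 0) = r) (hW1 : Module.finrank F (gW 1) = m * n) :
    derivedSub (superBracket f) = (⊥ : Submodule F V).prod (⊤ : Submodule F W) ∧
    {z : V × W | ∀ x : V × W, superBracket f z x = 0}
      = (derivedSub (superBracket f) : Set (V × W)) ∧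
    Module.finrank F ((gV 0).prod (gW 0)) = m + r ∧
    Module.finrank F ((gV 1).prod (gW 1)) = m * n + n ∧
    Module.finrank F ↥(derivedSub (superBracket f) ⊓ (gV 0).prod (gW 0)) = r ∧
    Module.finrank F ↥(derivedSub (superBracket f) ⊓ (gV 1).prod (gW 1)) = m * n := by
  have hker : LinearMap.ker f = ⊥ :=
    hf.ker_eq_bot (Submodule.one_le_finrank_iff.1 (hV0 ▸ hm))
      (Submodule.one_le_finrank_iff.1 (hV1 ▸ hn)) (by rw [hV0, hV1, hW1])
  have hderived : derivedSub (superBracket f) = (⊥ : Submodule F V).prod ⊤ := by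
    rw [derivedSub_superBracket, hf.span_eq_top]
  have hinf (τ : ZMod 2) :
      Module.finrank F ↥(derivedSub (superBracket f) ⊓ (gV τ).prod (gW τ)) =
        Module.finrank F (gW τ) := by
    rw [hderived, Submodule.prod_inf_prod, bot_inf_eq, top_inf_eq, finrank_submodule_prod,
      finrank_bot, zero_add]
  refine ⟨hderived, ?_, ?_, ?_, (hinf 0).trans hW0, (hinf 1).trans hW1⟩
  · rw [setOf_forall_superBracket_eq_zero, hker, hderived]
  · rw [finrank_submodule_prod, hV0, hW0]
  · rw [finrank_submodule_prod, hV1, hW1, add_comm]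

/-- If `f` is an odd object of SSKE of dimension `(m | n)` with
`m, n ≥ 1` and rank `(0 | mn)`, then `L_f` is a generalized Heisenberg Lie
superalgebra of dimension `(m | mn + n)` whose derived subalgebra has dimension
`(0 | mn)`. -/
theorem stmt6 [Field F] [AddCommGroup V] [Module F V] [AddCommGroup W] [Module F W]
    [FiniteDimensional F V] [FiniteDimensional F W] [Nontrivial V] [Nontrivial W]
    (hchar2 : (2 : F) ≠ 0) (hchar3 : (3 : F) ≠ 0)
    (gV : ZMod 2 → Submodule F V) (gW : ZMod 2 → Submodule F W)
    (f : V →ₗ[F] V →ₗ[F] W) (hf : IsSSKE gV gW f)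
    (hodd00 : ∀ u ∈ gV 0, ∀ v ∈ gV 0, f u v = 0)
    (hodd11 : ∀ u ∈ gV 1, ∀ v ∈ gV 1, f u v = 0)
    (m n : ℕ) (hm : 1 ≤ m) (hn : 1 ≤ n)
    (hV0 : Module.finrank F ↥(gV 0) = m) (hV1 : Module.finrank F ↥(gV 1) = n)
    (hW0 : gW 0 = ⊥) (hW1 : Module.finrank F ↥(gW 1) = m * n) :
    derivedSub (superBracket f) = (⊥ : Submodule F V).prod (⊤ : Submodule F W) ∧
    {z : V × W | ∀ x : V × W, superBracket f z x = 0}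
      = (derivedSub (superBracket f) : Set (V × W)) ∧
    Module.finrank F ↥((gV 0).prod (gW 0)) = m ∧
    Module.finrank F ↥((gV 1).prod (gW 1)) = m * n + n ∧
    Module.finrank F ↥(derivedSub (superBracket f) ⊓ (gV 0).prod (gW 0)) = 0 ∧
    Module.finrank F ↥(derivedSub (superBracket f) ⊓ (gV 1).prod (gW 1)) = m * n :=
  stmt6_general gV gW f hf m n 0 hm hn hV0 hV1 (by rw [hW0, finrank_bot]) hW1
end
end

section
/- Let f : V × V → W be a decomposable nondegenerate object of SSKE with V = V̄₁ ⊕ V̄₂, f(V̄₁, V̄₂) = 0, W̄ᵢ the span of f(V̄ᵢ, V̄ᵢ), and f̄ᵢ the restriction of f to V̄ᵢ × V̄ᵢ. Assume dim W = 2, W̄₁ = W, and W = W̄₂ ⊕ Ū for a one-dimensional graded subspace Ū; let π : W → Ū be the projection along W̄₂ and set f̃₁ = π ∘ f̄₁ : V̄₁ × V̄₁ → Ū. If f̃₁ is a decomposable object of SSKE, then X_f = X_{f̃₁} + V ⊗ W̄₂ + V̄₂ ⊗ Ū as subspaces of V ⊗ W. -/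
open TensorProduct

noncomputable section

variable {F V W L : Type*}

/-!
For an orthogonal graded splitting `V = V₁ + V₂` and `Wᵢ = span f(Vᵢ, Vᵢ)`, expanding the cyclic
sums gives `X_f = X_{f₁} + X_{f₂} + V₁ ⊗ W₂ + V₂ ⊗ W₁`: a cyclic sum of `a, b ∈ Vᵢ` and `c ∈ Vⱼ`
with `i ≠ j` collapses, up to sign, to `c ⊗ f(a, b)`. If `W₁ = W`, the term `V₂ ⊗ W` absorbs
`X_{f₂}`. Since `X_{π ∘ f₁}` is the image of `X_{f₁}` under `id ⊗ π`, the two agree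
modulo `V₁ ⊗ W₂`.
-/

theorem span_setOf_exists_eq_map₂ {R M N P : Type*} [CommSemiring R] [AddCommMonoid M]
    [AddCommMonoid N] [AddCommMonoid P] [Module R M] [Module R N] [Module R P]
    (f : M →ₗ[R] N →ₗ[R] P) (A : Submodule R M) (B : Submodule R N) :
    Submodule.span R {z : P | ∃ a ∈ A, ∃ b ∈ B, z = f a b} = Submodule.map₂ f A B := by
  simp only [Submodule.map₂_eq_span_image2, Set.image2, SetLike.mem_coe, eq_comm]

theorem map_sup_eq_sup_of_sub_mem {R M : Type*} [Ring R] [AddCommGroup M] [Module R M]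
    {X K : Submodule R M} {φ : M →ₗ[R] M} (h : ∀ x ∈ X, x - φ x ∈ K) : X.map φ ⊔ K = X ⊔ K := by
  apply le_antisymm
  · refine sup_le ?_ le_sup_right
    rintro _ ⟨x, hx, rfl⟩
    rw [← sub_sub_cancel x (φ x)]
    exact sub_mem (Submodule.mem_sup_left hx) (Submodule.mem_sup_right (h x hx))
  · refine sup_le (fun x hx => ?_) le_sup_right
    rw [← add_sub_cancel (φ x) x]
    exact Submodule.add_mem_sup (Submodule.mem_map_of_mem hx) (h x hx)

section XFr

variable [Field F] [AddCommGroup V] [Module F V] [AddCommGroup W] [Module F W]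
  [AddCommGroup L] [Module F L]

theorem tensSpan_eq_map₂ (A : Submodule F V) (B : Submodule F W) :
    tensSpan A B = Submodule.map₂ (TensorProduct.mk F V W) A B :=
  span_setOf_exists_eq_map₂ (TensorProduct.mk F V W) A B

theorem tmul_mem_tensSpan {A : Submodule F V} {B : Submodule F W} {a : V} {b : W}
    (ha : a ∈ A) (hb : b ∈ B) : a ⊗ₜ[F] b ∈ tensSpan A B :=
  Submodule.subset_span ⟨a, ha, b, hb, rfl⟩

theorem tensSpan_sup_left (A A' : Submodule F V) (B : Submodule F W) :
    tensSpan (A ⊔ A') B = tensSpan A B ⊔ tensSpan A' B := by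
  simp only [tensSpan_eq_map₂, Submodule.map₂_sup_left]

theorem tensSpan_sup_right (A : Submodule F V) (B B' : Submodule F W) :
    tensSpan A (B ⊔ B') = tensSpan A B ⊔ tensSpan A B' := by
  simp only [tensSpan_eq_map₂, Submodule.map₂_sup_right]

theorem sub_lTensor_mem_tensSpan {A : Submodule F V} {T : Submodule F W} {π : W →ₗ[F] W}
    (hπ : ∀ w, w - π w ∈ T) {z : V ⊗[F] W} (hz : z ∈ tensSpan A ⊤) :
    z - π.lTensor V z ∈ tensSpan A T := by
  suffices h : tensSpan A ⊤ ≤ (tensSpan A T).comap (LinearMap.id - π.lTensor V) from h hz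
  rw [tensSpan_eq_map₂ A ⊤, Submodule.map₂_le]
  intro a ha w _
  simpa only [Submodule.mem_comap, LinearMap.sub_apply, LinearMap.id_apply,
    TensorProduct.mk_apply, LinearMap.lTensor_tmul, ← TensorProduct.tmul_sub]
    using tmul_mem_tensSpan ha (hπ w)

variable {gV : ZMod 2 → Submodule F V} {f : V →ₗ[F] V →ₗ[F] W} {A B U : Submodule F V}

theorem IsGradedSub.iSup_inf (hA : IsGradedSub gV A) : ⨆ σ, A ⊓ gV σ = A := by
  apply le_antisymm (iSup_le fun _ => inf_le_left)
  conv_lhs => rw [hA]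
  exact sup_le (le_iSup (fun σ => A ⊓ gV σ) 0) (le_iSup (fun σ => A ⊓ gV σ) 1)

theorem IsGradedSub.map₂_le {B : Submodule F W} {g : V →ₗ[F] W →ₗ[F] L}
    {T : Submodule F L} (hA : IsGradedSub gV A)
    (h : ∀ σ, ∀ a ∈ A ⊓ gV σ, B ≤ T.comap (g a)) : Submodule.map₂ g A B ≤ T := by
  rw [← hA.iSup_inf, Submodule.map₂_iSup_left]
  exact iSup_le fun σ => Submodule.map₂_le.2 (h σ)

theorem IsGradedSub.le_of_forall_homogeneous {T : Submodule F V} (hA : IsGradedSub gV A)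
    (h : ∀ σ, ∀ a ∈ A ⊓ gV σ, a ∈ T) : A ≤ T := by
  rw [← hA.iSup_inf]
  exact iSup_le h

theorem IsGradedSub.inf_sup_inf_eq (hgV : iSupIndep gV) (hA : IsGradedSub gV A)
    (hB : IsGradedSub gV B) (hAB : Codisjoint A B) (σ : ZMod 2) :
    A ⊓ gV σ ⊔ B ⊓ gV σ = gV σ := by
  have htop : ⨆ σ, A ⊓ gV σ ⊔ B ⊓ gV σ = ⊤ := by
    rw [iSup_sup_eq, hA.iSup_inf, hB.iSup_inf, hAB.eq_top]
  exact congrFun ((hgV.le_iff_eq_of_iSup_eq_top htop).1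
    fun _ => sup_le inf_le_right inf_le_right) σ

theorem IsSSKE.apply_eq_zero_symm {gW : ZMod 2 → Submodule F W} (hf : IsSSKE gV gW f)
    (hA : IsGradedSub gV A) (hB : IsGradedSub gV B)
    (hAB : ∀ a ∈ A, ∀ b ∈ B, f a b = 0) : ∀ b ∈ B, ∀ a ∈ A, f b a = 0 := by
  suffices h : Submodule.map₂ f B A ≤ ⊥ from
    fun b hb a ha => (Submodule.mem_bot F).1 (h (Submodule.apply_mem_map₂ f hb ha))
  refine hB.map₂_le fun σ b hb => hA.le_of_forall_homogeneous fun τ a ha => ?_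
  rw [Submodule.mem_comap, Submodule.mem_bot, hf.skew σ τ b hb.2 a ha.2, hAB a ha.1 b hb.1,
    smul_zero]

theorem ssign_ne_zero (σ τ : ZMod 2) : ssign F σ τ ≠ 0 :=
  pow_ne_zero _ (neg_ne_zero.2 one_ne_zero)

/-- The signed cyclic sum of `a ⊗ f(b, c)`, whose values on homogeneous elements generate `X_f`.
The degrees `σ, τ, ρ` of `a, b, c` are explicit arguments, so that the sum is defined, and
additive in `a, b, c`, without any homogeneity assumption. -/
def superCyclicSum (f : V →ₗ[F] V →ₗ[F] W) (σ τ ρ : ZMod 2) (a b c : V) : V ⊗[F] W :=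
  ssign F σ ρ • (a ⊗ₜ[F] f b c) + ssign F τ σ • (b ⊗ₜ[F] f c a) + ssign F ρ τ • (c ⊗ₜ[F] f a b)

theorem superCyclicSum_mem {S : Submodule F (V ⊗[F] W)} {a b c : V} (ha : a ⊗ₜ[F] f b c ∈ S)
    (hb : b ⊗ₜ[F] f c a ∈ S) (hc : c ⊗ₜ[F] f a b ∈ S) (σ τ ρ : ZMod 2) :
    superCyclicSum f σ τ ρ a b c ∈ S :=
  add_mem (add_mem (S.smul_mem _ ha) (S.smul_mem _ hb)) (S.smul_mem _ hc)

theorem superCyclicSum_mem_XFr {σ τ ρ : ZMod 2} {a b c : V} (ha : a ∈ U ⊓ gV σ)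
    (hb : b ∈ U ⊓ gV τ) (hc : c ∈ U ⊓ gV ρ) : superCyclicSum f σ τ ρ a b c ∈ XFr gV U f :=
  Submodule.subset_span ⟨σ, τ, ρ, a, ha, b, hb, c, hc, rfl⟩

theorem XFr_le {S : Submodule F (V ⊗[F] W)} :
    XFr gV U f ≤ S ↔ ∀ σ τ ρ, ∀ a ∈ U ⊓ gV σ, ∀ b ∈ U ⊓ gV τ, ∀ c ∈ U ⊓ gV ρ,
      superCyclicSum f σ τ ρ a b c ∈ S := by
  refine ⟨fun h σ τ ρ a ha b hb c hc => h (superCyclicSum_mem_XFr ha hb hc), fun h => ?_⟩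
  refine Submodule.span_le.2 ?_
  rintro _ ⟨σ, τ, ρ, a, ha, b, hb, c, hc, rfl⟩
  exact h σ τ ρ a ha b hb c hc

theorem XFr_mono (hAB : A ≤ B) : XFr gV A f ≤ XFr gV B f :=
  XFr_le.2 fun _ _ _ _ ha _ hb _ hc =>
    superCyclicSum_mem_XFr ⟨hAB ha.1, ha.2⟩ ⟨hAB hb.1, hb.2⟩ ⟨hAB hc.1, hc.2⟩

theorem XFr_le_tensSpan_top : XFr gV U f ≤ tensSpan U ⊤ :=
  XFr_le.2 fun σ τ ρ _ ha _ hb _ hc =>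
    superCyclicSum_mem (tmul_mem_tensSpan ha.1 Submodule.mem_top)
      (tmul_mem_tensSpan hb.1 Submodule.mem_top) (tmul_mem_tensSpan hc.1 Submodule.mem_top) σ τ ρ

theorem lTensor_superCyclicSum (π : W →ₗ[F] L) (σ τ ρ : ZMod 2) (a b c : V) :
    π.lTensor V (superCyclicSum f σ τ ρ a b c) = superCyclicSum (f.compr₂ π) σ τ ρ a b c := by
  simp only [superCyclicSum, map_add, map_smul, LinearMap.lTensor_tmul, LinearMap.compr₂_apply]

theorem XFr_compr₂ (π : W →ₗ[F] L) :
    XFr gV U (f.compr₂ π) = (XFr gV U f).map (π.lTensor V) := by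
  apply le_antisymm
  · refine XFr_le.2 fun σ τ ρ a ha b hb c hc => ?_
    rw [← lTensor_superCyclicSum]
    exact Submodule.mem_map_of_mem (superCyclicSum_mem_XFr ha hb hc)
  · refine Submodule.map_le_iff_le_comap.2 (XFr_le.2 fun σ τ ρ a ha b hb c hc => ?_)
    rw [Submodule.mem_comap, lTensor_superCyclicSum]
    exact superCyclicSum_mem_XFr ha hb hc

theorem XFr_compr₂_sup_tensSpan {T : Submodule F W} {π : W →ₗ[F] W} (hπ : ∀ w, w - π w ∈ T) :
    XFr gV U (f.compr₂ π) ⊔ tensSpan U T = XFr gV U f ⊔ tensSpan U T := by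
  rw [XFr_compr₂]
  exact map_sup_eq_sup_of_sub_mem fun z hz =>
    sub_lTensor_mem_tensSpan hπ (XFr_le_tensSpan_top hz)

theorem superCyclicSum_of_apply_eq_zero {a b c : V} (hbc : f b c = 0) (hca : f c a = 0)
    (σ τ ρ : ZMod 2) : superCyclicSum f σ τ ρ a b c = ssign F ρ τ • (c ⊗ₜ[F] f a b) := by
  simp only [superCyclicSum, hbc, hca, TensorProduct.tmul_zero, smul_zero, zero_add]

theorem tensSpan_map₂_le_XFr (hA : IsGradedSub gV A) (hB : IsGradedSub gV B)
    (hAB : ∀ a ∈ A, ∀ b ∈ B, f a b = 0) (hBA : ∀ b ∈ B, ∀ a ∈ A, f b a = 0) :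
    tensSpan B (Submodule.map₂ f A A) ≤ XFr gV ⊤ f := by
  rw [tensSpan_eq_map₂]
  refine hB.map₂_le fun ρ c hc => hA.map₂_le fun σ a ha =>
    hA.le_of_forall_homogeneous fun τ b hb => ?_
  change c ⊗ₜ[F] f a b ∈ XFr gV ⊤ f
  rw [← Submodule.smul_mem_iff _ (ssign_ne_zero (F := F) ρ τ),
    ← superCyclicSum_of_apply_eq_zero (hAB b hb.1 c hc.1) (hBA c hc.1 a ha.1) σ τ ρ]
  exact superCyclicSum_mem_XFr ⟨trivial, ha.2⟩ ⟨trivial, hb.2⟩ ⟨trivial, hc.2⟩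

theorem tmul_apply_add_of_orthogonal (hAB : ∀ a ∈ A, ∀ b ∈ B, f a b = 0)
    (hBA : ∀ b ∈ B, ∀ a ∈ A, f b a = 0) (a a' : V) {b b' c c' : V}
    (hb : b ∈ A) (hb' : b' ∈ B) (hc : c ∈ A) (hc' : c' ∈ B) :
    (a + a') ⊗ₜ[F] f (b + b') (c + c') =
      a ⊗ₜ[F] f b c + a' ⊗ₜ[F] f b' c' + (a ⊗ₜ[F] f b' c' + a' ⊗ₜ[F] f b c) := by
  have hf : f (b + b') (c + c') = f b c + f b' c' := by
    simp only [map_add, LinearMap.add_apply, hAB b hb c' hc', hBA b' hb' c hc, add_zero, zero_add]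
  rw [hf, TensorProduct.add_tmul, TensorProduct.tmul_add, TensorProduct.tmul_add]
  abel

theorem superCyclicSum_add_sub_mem_of_orthogonal (hAB : ∀ a ∈ A, ∀ b ∈ B, f a b = 0)
    (hBA : ∀ b ∈ B, ∀ a ∈ A, f b a = 0) (σ τ ρ : ZMod 2) {a a' b b' c c' : V}
    (ha : a ∈ A) (ha' : a' ∈ B) (hb : b ∈ A) (hb' : b' ∈ B) (hc : c ∈ A) (hc' : c' ∈ B) :
    superCyclicSum f σ τ ρ (a + a') (b + b') (c + c') -
        (superCyclicSum f σ τ ρ a b c + superCyclicSum f σ τ ρ a' b' c') ∈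
      tensSpan A (Submodule.map₂ f B B) ⊔ tensSpan B (Submodule.map₂ f A A) := by
  set M := tensSpan A (Submodule.map₂ f B B) ⊔ tensSpan B (Submodule.map₂ f A A)
  have hmixed {x x' y y' z z' : V} (hx : x ∈ A) (hx' : x' ∈ B) (hy : y ∈ A) (hy' : y' ∈ B)
      (hz : z ∈ A) (hz' : z' ∈ B) : x ⊗ₜ[F] f y' z' + x' ⊗ₜ[F] f y z ∈ M :=
    Submodule.add_mem_sup (tmul_mem_tensSpan hx (Submodule.apply_mem_map₂ f hy' hz'))
      (tmul_mem_tensSpan hx' (Submodule.apply_mem_map₂ f hy hz))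
  have hsum := add_mem (add_mem
    (M.smul_mem (ssign F σ ρ) (hmixed ha ha' hb hb' hc hc'))
    (M.smul_mem (ssign F τ σ) (hmixed hb hb' hc hc' ha ha')))
    (M.smul_mem (ssign F ρ τ) (hmixed hc hc' ha ha' hb hb'))
  convert hsum using 1
  rw [superCyclicSum, tmul_apply_add_of_orthogonal hAB hBA a a' hb hb' hc hc',
    tmul_apply_add_of_orthogonal hAB hBA b b' hc hc' ha ha',
    tmul_apply_add_of_orthogonal hAB hBA c c' ha ha' hb hb', superCyclicSum, superCyclicSum]
  module

theorem XFr_top_eq_of_orthogonal (hgV : iSupIndep gV) (hA : IsGradedSub gV A)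
    (hB : IsGradedSub gV B) (hV : Codisjoint A B) (hAB : ∀ a ∈ A, ∀ b ∈ B, f a b = 0)
    (hBA : ∀ b ∈ B, ∀ a ∈ A, f b a = 0) :
    XFr gV ⊤ f = XFr gV A f ⊔ XFr gV B f ⊔
      (tensSpan A (Submodule.map₂ f B B) ⊔ tensSpan B (Submodule.map₂ f A A)) := by
  apply le_antisymm
  · have hsplit (σ : ZMod 2) (x : V) (hx : x ∈ gV σ) :
        ∃ y ∈ A ⊓ gV σ, ∃ z ∈ B ⊓ gV σ, y + z = x := by
      rwa [← Submodule.mem_sup, hA.inf_sup_inf_eq hgV hB hV]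
    refine XFr_le.2 fun σ τ ρ a ha b hb c hc => ?_
    obtain ⟨a₁, ha₁, a₂, ha₂, rfl⟩ := hsplit σ a ha.2
    obtain ⟨b₁, hb₁, b₂, hb₂, rfl⟩ := hsplit τ b hb.2
    obtain ⟨c₁, hc₁, c₂, hc₂, rfl⟩ := hsplit ρ c hc.2
    have hdiag : superCyclicSum f σ τ ρ a₁ b₁ c₁ + superCyclicSum f σ τ ρ a₂ b₂ c₂ ∈
        XFr gV A f ⊔ XFr gV B f :=
      Submodule.add_mem_sup (superCyclicSum_mem_XFr ha₁ hb₁ hc₁)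
        (superCyclicSum_mem_XFr ha₂ hb₂ hc₂)
    have hmixed := superCyclicSum_add_sub_mem_of_orthogonal hAB hBA σ τ ρ
      ha₁.1 ha₂.1 hb₁.1 hb₂.1 hc₁.1 hc₂.1
    simpa only [add_sub_cancel] using Submodule.add_mem_sup hdiag hmixed
  · exact sup_le (sup_le (XFr_mono le_top) (XFr_mono le_top))
      (sup_le (tensSpan_map₂_le_XFr hB hA hBA hAB) (tensSpan_map₂_le_XFr hA hB hAB hBA))

end XFr

theorem stmt9_general [Field F] [AddCommGroup V] [Module F V] [AddCommGroup W] [Module F W]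
    {gV : ZMod 2 → Submodule F V} (hgV : iSupIndep gV) {f : V →ₗ[F] V →ₗ[F] W}
    {V1 V2 : Submodule F V} (hV1 : IsGradedSub gV V1) (hV2 : IsGradedSub gV V2)
    (hV : Codisjoint V1 V2) (h12 : ∀ u ∈ V1, ∀ v ∈ V2, f u v = 0)
    (h21 : ∀ v ∈ V2, ∀ u ∈ V1, f v u = 0) (hW1 : Submodule.map₂ f V1 V1 = ⊤)
    {W2 U : Submodule F W} (hW2 : W2 = Submodule.map₂ f V2 V2) (hW : Codisjoint W2 U)
    {π : W →ₗ[F] W} (hπU : ∀ w ∈ U, π w = w) (hπW2 : ∀ w ∈ W2, π w = 0) :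
    XFr gV ⊤ f = XFr gV V1 (f.compr₂ π) ⊔ tensSpan ⊤ W2 ⊔ tensSpan V2 U := by
  have hπ (w : W) : w - π w ∈ W2 := by
    obtain ⟨x, hx, u, hu, rfl⟩ := Submodule.mem_sup.1 (hW.eq_top.ge (Submodule.mem_top (x := w)))
    rwa [map_add, hπW2 x hx, hπU u hu, zero_add, add_sub_cancel_right]
  have habsorb : XFr gV V2 f ≤ tensSpan V2 ⊤ := XFr_le_tensSpan_top
  calc XFr gV ⊤ f
    _ = XFr gV V1 f ⊔ XFr gV V2 f ⊔ (tensSpan V1 W2 ⊔ tensSpan V2 ⊤) := by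
        rw [XFr_top_eq_of_orthogonal hgV hV1 hV2 hV h12 h21, hW1, hW2]
    _ = XFr gV V1 f ⊔ tensSpan V1 W2 ⊔ (XFr gV V2 f ⊔ tensSpan V2 ⊤) := sup_sup_sup_comm ..
    _ = XFr gV V1 (f.compr₂ π) ⊔ tensSpan V1 W2 ⊔ tensSpan V2 ⊤ := by
        rw [sup_eq_right.2 habsorb, XFr_compr₂_sup_tensSpan hπ]
    _ = XFr gV V1 (f.compr₂ π) ⊔ tensSpan V1 W2 ⊔ (tensSpan V2 W2 ⊔ tensSpan V2 U) := by
        rw [← hW.eq_top, tensSpan_sup_right]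
    _ = XFr gV V1 (f.compr₂ π) ⊔ tensSpan ⊤ W2 ⊔ tensSpan V2 U := by
        rw [← hV.eq_top, tensSpan_sup_left]
        simp only [sup_assoc]

/-- Let `f` be a decomposable nondegenerate object of SSKE with
`dim W = 2`, `W̄₁ = W` and `W = W̄₂ ⊕ Ū` with `Ū` a one-dimensional graded
subspace; let `π : W → W` be the projection onto `Ū` along `W̄₂` and
`f̃₁ = π ∘ f̄₁`. If `f̃₁` is a decomposable object of SSKE, then
`X_f = X_{f̃₁} + V ⊗ W̄₂ + V̄₂ ⊗ Ū` inside `V ⊗ W`. -/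
theorem stmt9 [Field F] [AddCommGroup V] [Module F V] [AddCommGroup W] [Module F W]
    [FiniteDimensional F V] [FiniteDimensional F W] [Nontrivial V] [Nontrivial W]
    (hchar2 : (2 : F) ≠ 0) (hchar3 : (3 : F) ≠ 0)
    (gV : ZMod 2 → Submodule F V) (gW : ZMod 2 → Submodule F W)
    (f : V →ₗ[F] V →ₗ[F] W) (hf : IsSSKE gV gW f)
    (V1 V2 : Submodule F V) (hV1ne : V1 ≠ ⊥) (hV2ne : V2 ≠ ⊥)
    (hV1g : IsGradedSub gV V1) (hV2g : IsGradedSub gV V2)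
    (hcompl : IsCompl V1 V2)
    (hzero : ∀ u ∈ V1, ∀ v ∈ V2, f u v = 0)
    (hnd : ∀ u : V, (∀ v : V, f v u = 0) → u = 0)
    (hrankW : Module.finrank F W = 2) :
    ∀ W1 W2 : Submodule F W,
      W1 = Submodule.span F {w : W | ∃ u ∈ V1, ∃ v ∈ V1, w = f u v} →
      W2 = Submodule.span F {w : W | ∃ u ∈ V2, ∃ v ∈ V2, w = f u v} →
      W1 = ⊤ →
      ∀ (U : Submodule F W) (π : W →ₗ[F] W),
        Module.finrank F ↥U = 1 → IsGradedSub gW U → IsCompl W2 U →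
        (∀ w ∈ U, π w = w) → (∀ w ∈ W2, π w = 0) →
        (∃ D1 D2 : Submodule F V, D1 ≠ ⊥ ∧ D2 ≠ ⊥ ∧
          IsGradedSub gV D1 ∧ IsGradedSub gV D2 ∧
          D1 ⊔ D2 = V1 ∧ D1 ⊓ D2 = ⊥ ∧
          (∀ u ∈ D1, ∀ v ∈ D2, π (f u v) = 0)) →
        Submodule.span F {w : W | ∃ u ∈ V1, ∃ v ∈ V1, w = π (f u v)} = U →
        XFr gV (⊤ : Submodule F V) f
          = XFr gV V1 (f.compr₂ π) ⊔ tensSpan (⊤ : Submodule F V) W2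
              ⊔ tensSpan V2 U := by
  rintro _ W2 rfl hW2 hW1 U π - - hW hπU hπW2 - -
  rw [span_setOf_exists_eq_map₂] at hW1 hW2
  exact stmt9_general hf.internalV.submodule_iSupIndep hV1g hV2g hcompl.codisjoint hzero
    (hf.apply_eq_zero_symm hV1g hV2g hzero) hW1 hW2 hW.codisjoint hπU hπW2
end
end
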